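/- arXiv:2402.03983 — 2 statements merged into one kernel-verified Lean document; each statement's English description precedes it below -/
import Mathlib

section
/- Fix an integer m ≥ 2 and M = {M_β}_{|β|≤m} ⊆ ℂ, and for each positive integer j let μ_j ∈ 𝓜_m^M be the measure whose Fourier transform is φ_{1/j}. Then the sequence (μ_j) is Cauchy with respect to d_m: d_m(μ_j, μ_k) ≤ |1/j − 1/k| for all positive integers j, k. -/
open MeasureTheory Filter Topology
open scoped ENNReal NNReal

noncomputable section
open scoped Classical


abbrev Vd (d : ℕ) := EuclideanSpace ℝ (Fin d)

/-- The total variation measure `|μ|` of a complex measure (realized as the sum of the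
total variations of its real and imaginary parts). -/
def ctv {d : ℕ} (μ : ComplexMeasure (Vd d)) : Measure (Vd d) :=
  μ.re.totalVariation + μ.im.totalVariation

/-- Integral of a complex-valued function against a complex measure. -/
def cint {d : ℕ} (μ : ComplexMeasure (Vd d)) (f : Vd d → ℂ) : ℂ :=
  ((∫ x, f x ∂μ.re.toJordanDecomposition.posPart) -
    (∫ x, f x ∂μ.re.toJordanDecomposition.negPart)) +
  Complex.I * ((∫ x, f x ∂μ.im.toJordanDecomposition.posPart) -
    (∫ x, f x ∂μ.im.toJordanDecomposition.negPart))

/-- The Fourier transform `μ̂(ξ) = ∫ e^{-i x·ξ} dμ(x)` of a complex measure. -/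
def ftc {d : ℕ} (μ : ComplexMeasure (Vd d)) (ξ : Vd d) : ℂ :=
  cint μ (fun x => Complex.exp (-(Complex.I) * ((∑ i, x i * ξ i : ℝ) : ℂ)))

/-- The Fourier-based distance `d_m(μ,ν) = sup_{ξ ≠ 0} |μ̂(ξ)-ν̂(ξ)|/|ξ|^m` (valued in `ℝ≥0∞`). -/
def dm {d : ℕ} (m : ℕ) (μ ν : ComplexMeasure (Vd d)) : ℝ≥0∞ :=
  ⨆ ξ : {ξ : Vd d // ξ ≠ 0}, ENNReal.ofReal (‖ftc μ ξ - ftc ν ξ‖ / ‖(ξ : Vd d)‖ ^ m)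

/-- The finite set of multi-indices `β ∈ ℕ^d` with `|β| ≤ m`. -/
def multiIdx (d m : ℕ) : Finset (Fin d → ℕ) :=
  (Fintype.piFinset fun _ : Fin d => Finset.range (m + 1)).filter fun γ => ∑ i, γ i ≤ m

/-- The set `𝓜_m^M` of complex measures with finite `m`-th absolute moment and
moments prescribed by `M`. -/
def MomentSet (d m : ℕ) (M : (Fin d → ℕ) → ℂ) : Set (ComplexMeasure (Vd d)) :=
  {μ | (∫⁻ x, (‖x‖₊ : ℝ≥0∞) ^ m ∂(ctv μ)) < ⊤ ∧
       ∀ β : Fin d → ℕ, (∑ i, β i) ≤ m →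
         cint μ (fun x => ∏ i, ((x i : ℂ)) ^ (β i)) = M β}

/-- The polynomial `P(ξ) = Σ_{|γ|≤m} (M_γ/γ!) (-iξ)^γ`. -/
def Ppoly (d m : ℕ) (M : (Fin d → ℕ) → ℂ) (ξ : Vd d) : ℂ :=
  ∑ γ ∈ multiIdx d m,
    (M γ / ∏ i, (Nat.factorial (γ i) : ℂ)) * ∏ i, (-(Complex.I) * (ξ i)) ^ (γ i)

/-- The function `φ_δ`. -/
def phiFun (d m : ℕ) (M : (Fin d → ℕ) → ℂ) (δ : ℝ) (ξ : Vd d) : ℂ :=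
  if ξ = 0 then Ppoly d m M 0
  else (Ppoly d m M ξ +
      ((‖ξ‖ ^ (m + 2) * Real.sin (1 / ‖ξ‖ ^ m) * Real.exp (-δ / ‖ξ‖ ^ 2) : ℝ) : ℂ)) *
    ((Real.exp (-‖ξ‖ ^ (2 * m)) : ℝ) : ℂ)

/-- The function `f_δ`. -/
def fdelta (d m : ℕ) (δ : ℝ) (ξ : Vd d) : ℝ :=
  if ξ = 0 then 0
  else ‖ξ‖ ^ (m + 2) * Real.sin (1 / ‖ξ‖ ^ m) * Real.exp (-δ / ‖ξ‖ ^ 2)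

/-- First-order partial derivative in the `i`-th coordinate direction. -/
def pderiv1 {d : ℕ} {F : Type*} [NormedAddCommGroup F] [NormedSpace ℝ F]
    (i : Fin d) (f : Vd d → F) : Vd d → F :=
  fun ξ => fderiv ℝ f ξ (EuclideanSpace.single i 1)

/-- The multi-index partial derivative `D^β = ∂_{ξ_1}^{β_1} ⋯ ∂_{ξ_d}^{β_d}`. -/
def Dmulti {d : ℕ} {F : Type*} [NormedAddCommGroup F] [NormedSpace ℝ F]
    (β : Fin d → ℕ) (f : Vd d → F) : Vd d → F :=
  (List.ofFn fun i : Fin d => (pderiv1 i)^[β i]).foldr (fun op g => op g) f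

theorem exp_neg_lip_aux {x y : ℝ} (hx : 0 ≤ x) (hxy : x ≤ y) :
    |Real.exp (-x) - Real.exp (-y)| ≤ |x - y| := by
  have h1 : Real.exp (-y) ≤ Real.exp (-x) := Real.exp_le_exp.mpr (by linarith)
  have h2 : Real.exp (-y) = Real.exp (-x) * Real.exp (x - y) := by
    rw [← Real.exp_add]; congr 1; ring
  have h3 := Real.add_one_le_exp (x - y)
  have h4 : Real.exp (-x) ≤ 1 := Real.exp_le_one_iff.mpr (by linarith)
  have h5 := Real.exp_pos (-x)
  rw [abs_of_nonneg (by linarith), abs_of_nonpos (by linarith), h2]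
  nlinarith [mul_nonneg h5.le (sub_nonneg.mpr h3),
    mul_nonneg (sub_nonneg.mpr h4) (sub_nonneg.mpr hxy)]

theorem exp_neg_lip {x y : ℝ} (hx : 0 ≤ x) (hy : 0 ≤ y) :
    |Real.exp (-x) - Real.exp (-y)| ≤ |x - y| := by
  rcases le_total x y with h | h
  · exact exp_neg_lip_aux hx h
  · rw [abs_sub_comm, abs_sub_comm x y]
    exact exp_neg_lip_aux hy h

/-- For `m ≥ 2` and prescribed moments `M`, let `μ_j ∈ 𝓜_m^M` (for `j ≥ 1`)
be the measure whose Fourier transform is `φ_{1/j}`. Then `(μ_j)` is `d_m`-Cauchy: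
`d_m(μ_j, μ_k) ≤ |1/j - 1/k|` for all `j, k ≥ 1`. -/
theorem stmt14 (d m : ℕ) (hm : 2 ≤ m) (M : (Fin d → ℕ) → ℂ)
    (μ : ℕ → ComplexMeasure (Vd d))
    (hμ : ∀ j : ℕ, 1 ≤ j →
      μ j ∈ MomentSet d m M ∧ ftc (μ j) = phiFun d m M (1 / (j : ℝ))) :
    ∀ j k : ℕ, 1 ≤ j → 1 ≤ k →
      dm m (μ j) (μ k) ≤ ENNReal.ofReal |1 / (j : ℝ) - 1 / (k : ℝ)| := by
  intro j k hj hk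
  unfold dm
  refine iSup_le ?_
  rintro ⟨ξ, hξ⟩
  apply ENNReal.ofReal_le_ofReal
  rw [(hμ j hj).2, (hμ k hk).2]
  have hr : 0 < ‖ξ‖ := norm_pos_iff.mpr hξ
  simp only [phiFun, if_neg hξ]
  have ha : (0 : ℝ) ≤ 1 / (j : ℝ) := by positivity
  have hb : (0 : ℝ) ≤ 1 / (k : ℝ) := by positivity
  generalize 1 / (j : ℝ) = a at *
  generalize 1 / (k : ℝ) = b at *
  generalize Ppoly d m M ξ = P
  generalize ‖ξ‖ = r at *
  have e : (P + ((r ^ (m + 2) * Real.sin (1 / r ^ m) * Real.exp (-a / r ^ 2) : ℝ) : ℂ)) *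
        ((Real.exp (-r ^ (2 * m)) : ℝ) : ℂ) -
      (P + ((r ^ (m + 2) * Real.sin (1 / r ^ m) * Real.exp (-b / r ^ 2) : ℝ) : ℂ)) *
        ((Real.exp (-r ^ (2 * m)) : ℝ) : ℂ) =
      ((r ^ (m + 2) * (Real.sin (1 / r ^ m) * Real.exp (-r ^ (2 * m)) *
        (Real.exp (-(a / r ^ 2)) - Real.exp (-(b / r ^ 2)))) : ℝ) : ℂ) := by
    rw [neg_div, neg_div]
    push_cast
    ring
  rw [e, Complex.norm_real, Real.norm_eq_abs, abs_mul, abs_of_pos (pow_pos hr _),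
    div_le_iff₀ (pow_pos hr m), abs_mul, abs_mul]
  have h1 := Real.abs_sin_le_one (1 / r ^ m)
  have h2 : |Real.exp (-r ^ (2 * m))| ≤ 1 := by
    rw [Real.abs_exp, Real.exp_le_one_iff]
    have := pow_pos hr (2 * m)
    linarith
  have h3 := exp_neg_lip (x := a / r ^ 2) (y := b / r ^ 2) (by positivity) (by positivity)
  rw [← sub_div, abs_div, abs_of_pos (pow_pos hr 2)] at h3
  have h4 : |Real.sin (1 / r ^ m)| * |Real.exp (-r ^ (2 * m))| *
      |Real.exp (-(a / r ^ 2)) - Real.exp (-(b / r ^ 2))| ≤ 1 * 1 * (|a - b| / r ^ 2) := by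
    gcongr
  calc _ ≤ r ^ (m + 2) * (1 * 1 * (|a - b| / r ^ 2)) := by gcongr
    _ = |a - b| * r ^ m := by
      rw [pow_add]; field_simp

end
end

section
/- Fix an integer m ≥ 2 and M = {M_β}_{|β|≤m} ⊆ ℂ, and for each positive integer j let μ_j ∈ 𝓜_m^M be the measure whose Fourier transform is φ_{1/j}. There is no measure μ ∈ 𝓜_m^M such that d_m(μ_j, μ) → 0 as j → ∞. -/
open MeasureTheory Filter Topology
open scoped ENNReal NNReal

noncomputable section
open scoped Classical


lemma aux_seq (m : ℕ) (hm : 2 ≤ m) (h : ℝ → ℝ) (hc : ContDiff ℝ 2 h)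
    (hh : ∀ t, 0 < t → h t = t ^ (m + 2) * Real.sin (1 / t ^ m))
    (s : ℕ → ℝ) (hs0 : ∀ k, 0 < s k) (hs : Tendsto s atTop atTop) (c : ℝ)
    (hsin : ∀ k, Real.sin (s k) = 0) (hcos : ∀ k, Real.cos (s k) = c) :
    deriv (deriv h) 0 = -(m * c) := by
  have hm0 : (m : ℝ) ≠ 0 := by positivity
  have hg : ContDiff ℝ 1 (deriv h) := by
    have : ContDiff ℝ (1 + 1) h := by simpa [one_add_one_eq_two] using hc
    exact (contDiff_succ_iff_deriv.1 this).2.2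
  have hgd : HasDerivAt (deriv h) (deriv (deriv h) 0) 0 :=
    (hg.differentiable (by simp) 0).hasDerivAt
  have hgt : ∀ t, 0 < t → deriv h t = (m + 2) * t ^ (m + 1) * Real.sin (1 / t ^ m)
      - m * t * Real.cos (1 / t ^ m) := by
    intro t ht
    have e : h =ᶠ[𝓝 t] fun t => t ^ (m + 2) * Real.sin (1 / t ^ m) := by
      filter_upwards [lt_mem_nhds ht] with u hu using hh u hu
    rw [e.deriv_eq]
    have ht0 : t ^ m ≠ 0 := by positivity
    have h1 : HasDerivAt (fun t : ℝ => 1 / t ^ m) (-(m * t ^ (m - 1)) / (t ^ m) ^ 2) t := by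
      have h0 := (hasDerivAt_pow m t).inv ht0
      refine h0.congr_of_eventuallyEq (Eventually.of_forall fun u => ?_)
      simp
    have h2 := (hasDerivAt_pow (m + 2) t).mul h1.sin
    refine h2.deriv.trans ?_
    obtain ⟨n, rfl⟩ : ∃ n, m = n + 1 := ⟨m - 1, by omega⟩
    simp only [Nat.add_sub_cancel]
    push_cast
    field_simp
    ring
  set a : ℕ → ℝ := fun k => (s k) ^ (-(1 / (m : ℝ))) with ha
  have ha0 : ∀ k, 0 < a k := fun k => Real.rpow_pos_of_pos (hs0 k) _
  have ham : ∀ k, 1 / (a k) ^ m = s k := by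
    intro k
    rw [ha]
    simp only
    rw [← Real.rpow_natCast, ← Real.rpow_mul (hs0 k).le]
    have : -(1 / (m : ℝ)) * m = -1 := by field_simp
    rw [this, Real.rpow_neg_one]
    simp
  have hat : Tendsto a atTop (𝓝 0) :=
    (tendsto_rpow_neg_atTop (y := 1 / (m : ℝ)) (by positivity)).comp hs
  have hga : ∀ k, deriv h (a k) = -(m * c) * a k := by
    intro k
    rw [hgt _ (ha0 k), ham, hsin, hcos]
    ring
  have hg0 : deriv h 0 = 0 := by
    have t1 : Tendsto (fun k => deriv h (a k)) atTop (𝓝 (deriv h 0)) :=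
      (hg.continuous.tendsto 0).comp hat
    have t2 : Tendsto (fun k => deriv h (a k)) atTop (𝓝 0) := by
      simp_rw [hga]
      simpa using hat.const_mul (-(m * c))
    exact tendsto_nhds_unique t1 t2
  have hat' : Tendsto a atTop (𝓝[≠] 0) :=
    tendsto_nhdsWithin_iff.2 ⟨hat, Eventually.of_forall fun k => (ha0 k).ne'⟩
  have t1 := (hasDerivAt_iff_tendsto_slope.1 hgd).comp hat'
  have t2 : Tendsto (slope (deriv h) 0 ∘ a) atTop (𝓝 (-(m * c))) := by
    refine tendsto_const_nhds.congr fun k => ?_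
    simp only [Function.comp, slope_def_field, hg0, hga]
    have := (ha0 k).ne'
    field_simp
    simp
  exact tendsto_nhds_unique t1 t2

lemma aux_osc (m : ℕ) (hm : 2 ≤ m) (h : ℝ → ℝ) (hc : ContDiff ℝ 2 h)
    (hh : ∀ t, 0 < t → h t = t ^ (m + 2) * Real.sin (1 / t ^ m)) : False := by
  have tn : Tendsto (fun k : ℕ => ((k : ℝ) + 1) * (2 * Real.pi)) atTop atTop :=
    (tendsto_atTop_add_const_right _ _ tendsto_natCast_atTop_atTop).atTop_mul_const
      (by positivity)
  have e1 := aux_seq m hm h hc hh (fun k => ((k : ℝ) + 1) * (2 * Real.pi))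
    (fun k => by positivity) tn 1
    (fun k => by
      have := Real.sin_nat_mul_pi ((k + 1) * 2)
      push_cast at this
      rw [← this]; ring_nf)
    (fun k => by
      have := Real.cos_nat_mul_two_pi (k + 1)
      push_cast at this
      exact this)
  have e2 := aux_seq m hm h hc hh (fun k => ((k : ℝ) + 1) * (2 * Real.pi) + Real.pi)
    (fun k => by positivity) (tendsto_atTop_add_const_right _ _ tn) (-1)
    (fun k => by
      have := Real.sin_nat_mul_pi ((k + 1) * 2 + 1)
      push_cast at this
      rw [← this]; ring_nf)
    (fun k => by
      have := Real.cos_nat_mul_two_pi_add_pi (k + 1)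
      push_cast at this
      exact this)
  have : (0 : ℝ) < m := by positivity
  linarith

lemma aux_part {d m : ℕ} (hm : 2 ≤ m) (ρ : Measure (Vd d)) [IsFiniteMeasure ρ]
    (h : (∫⁻ x, (‖x‖₊ : ℝ≥0∞) ^ m ∂ρ) < ⊤) :
    ContDiff ℝ 2 (fun ξ : Vd d =>
      ∫ x, Complex.exp (-(Complex.I) * ((∑ i, x i * ξ i : ℝ) : ℂ)) ∂ρ) := by
  have hL : MemLp (id : Vd d → Vd d) (m : ℝ≥0∞) ρ := by
    refine ⟨aestronglyMeasurable_id, ?_⟩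
    rw [eLpNorm_lt_top_iff_lintegral_rpow_enorm_lt_top (by simp; omega) (by simp)]
    simpa [enorm_eq_nnnorm] using h
  have hL2 : MemLp (id : Vd d → Vd d) ((2 : ℕ) : ℝ≥0∞) ρ :=
    hL.mono_exponent (by exact_mod_cast hm)
  have hC := (contDiff_charFun hL2).comp (contDiff_neg (𝕜 := ℝ) (F := Vd d))
  convert! hC using 1
  funext ξ
  simp only [Function.comp, charFun_apply]
  congr 1
  funext x
  congr 1
  simp only [inner_neg_right, PiLp.inner_apply, Real.inner_apply]
  push_cast
  ring

lemma aux_ftc {d m : ℕ} (hm : 2 ≤ m) (ν : ComplexMeasure (Vd d))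
    (h : (∫⁻ x, (‖x‖₊ : ℝ≥0∞) ^ m ∂(ctv ν)) < ⊤) : ContDiff ℝ 2 (ftc ν) := by
  simp only [ctv, SignedMeasure.totalVariation, lintegral_add_measure, ENNReal.add_lt_top] at h
  obtain ⟨⟨h1, h2⟩, h3, h4⟩ := h
  unfold ftc cint
  exact ((aux_part hm _ h1).sub (aux_part hm _ h2)).add
    (contDiff_const.mul ((aux_part hm _ h3).sub (aux_part hm _ h4)))

lemma aux_P (d m : ℕ) (M : (Fin d → ℕ) → ℂ) : ContDiff ℝ 2 (Ppoly d m M) := by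
  unfold Ppoly
  refine ContDiff.sum fun γ _ => contDiff_const.mul (contDiff_prod fun i _ => ?_)
  refine (contDiff_const.mul ?_).pow _
  exact Complex.ofRealCLM.contDiff.comp (by fun_prop)

lemma aux_lim {d m : ℕ} (M : (Fin d → ℕ) → ℂ) (μ : ℕ → ComplexMeasure (Vd d))
    (hμ : ∀ j : ℕ, 1 ≤ j → ftc (μ j) = phiFun d m M (1 / (j : ℝ)))
    (ν : ComplexMeasure (Vd d)) (h : Tendsto (fun j => dm m (μ j) ν) atTop (𝓝 0))
    (ξ : Vd d) (hξ : ξ ≠ 0) :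
    ftc ν ξ = phiFun d m M 0 ξ := by
  have hn : 0 < ‖ξ‖ := norm_pos_iff.2 hξ
  have h1 : Tendsto (fun j => ENNReal.ofReal (‖ftc (μ j) ξ - ftc ν ξ‖ / ‖ξ‖ ^ m)) atTop (𝓝 0) :=
    tendsto_of_tendsto_of_tendsto_of_le_of_le tendsto_const_nhds h (fun _ => zero_le)
      (fun j => le_iSup (fun ξ : {ξ : Vd d // ξ ≠ 0} =>
        ENNReal.ofReal (‖ftc (μ j) ξ - ftc ν ξ‖ / ‖(ξ : Vd d)‖ ^ m)) ⟨ξ, hξ⟩)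
  have h2 : Tendsto (fun j => ‖ftc (μ j) ξ - ftc ν ξ‖ / ‖ξ‖ ^ m) atTop (𝓝 0) := by
    have := (ENNReal.tendsto_toReal ENNReal.zero_ne_top).comp h1
    refine (this.congr fun j => ?_)
    simp only [Function.comp]
    exact ENNReal.toReal_ofReal (by positivity)
  have h3 : Tendsto (fun j => ‖ftc (μ j) ξ - ftc ν ξ‖) atTop (𝓝 0) := by
    have := h2.mul_const (‖ξ‖ ^ m)
    rw [zero_mul] at this
    refine this.congr fun j => ?_
    field_simp
  have h4 : Tendsto (fun j => ftc (μ j) ξ) atTop (𝓝 (ftc ν ξ)) :=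
    tendsto_iff_norm_sub_tendsto_zero.2 h3
  have hcont : Continuous fun δ : ℝ => phiFun d m M δ ξ := by
    simp only [phiFun, hξ, if_false]
    fun_prop
  have h5 : Tendsto (fun j : ℕ => phiFun d m M (1 / (j : ℝ)) ξ) atTop (𝓝 (phiFun d m M 0 ξ)) :=
    (hcont.tendsto 0).comp tendsto_one_div_atTop_nhds_zero_nat
  refine tendsto_nhds_unique h4 (h5.congr' ?_)
  filter_upwards [eventually_ge_atTop 1] with j hj
  rw [hμ j hj]

/-- For `m ≥ 2` and prescribed moments `M`, let `μ_j ∈ 𝓜_m^M` (for `j ≥ 1`)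
be the measure whose Fourier transform is `φ_{1/j}`. Then there is no `μ ∈ 𝓜_m^M` with
`d_m(μ_j, μ) → 0` as `j → ∞`. -/
theorem stmt15 (d m : ℕ) (hd : 0 < d) (hm : 2 ≤ m) (M : (Fin d → ℕ) → ℂ)
    (μ : ℕ → ComplexMeasure (Vd d))
    (hμ : ∀ j : ℕ, 1 ≤ j →
      μ j ∈ MomentSet d m M ∧ ftc (μ j) = phiFun d m M (1 / (j : ℝ))) :
    ¬ ∃ ν ∈ MomentSet d m M, Tendsto (fun j => dm m (μ j) ν) atTop (𝓝 0) := by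
  rintro ⟨ν, hν, hlim⟩
  have hF := aux_ftc hm ν hν.1
  have hP := aux_P d m M
  have heq := aux_lim M μ (fun j hj => (hμ j hj).2) ν hlim
  set e : Vd d := EuclideanSpace.single ⟨0, hd⟩ 1 with he
  have hen : ‖e‖ = 1 := by simp [he]
  have hl : ContDiff ℝ 2 (fun t : ℝ => t • e) := by fun_prop
  have hE : ContDiff ℝ 2 (fun t : ℝ => ((Real.exp (t ^ (2 * m)) : ℝ) : ℂ)) :=
    Complex.ofRealCLM.contDiff.comp (Real.contDiff_exp.comp (contDiff_id.pow (2 * m)))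
  have hH : ContDiff ℝ 2 (fun t : ℝ => (ftc ν (t • e) *
      ((Real.exp (t ^ (2 * m)) : ℝ) : ℂ) - Ppoly d m M (t • e)).re) :=
    Complex.reCLM.contDiff.comp (((hF.comp hl).mul hE).sub (hP.comp hl))
  refine aux_osc m hm _ hH fun t ht => ?_
  have hne : t • e ≠ 0 := by
    rw [← norm_pos_iff, norm_smul, hen]
    simpa using ht.ne'
  have hnt : ‖t • e‖ = t := by rw [norm_smul, hen, mul_one, Real.norm_of_nonneg ht.le]
  rw [heq _ hne]
  simp only [phiFun, hne, if_false, hnt]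
  rw [mul_assoc, ← Complex.ofReal_mul, ← Real.exp_add]
  simp only [neg_add_cancel, Real.exp_zero, Complex.ofReal_one, mul_one, add_sub_cancel_left,
    Complex.ofReal_re, neg_zero, zero_div]

end
end
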